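/- arXiv:2507.17072 — 2 statements merged into one kernel-verified Lean document; each statement's English description precedes it below -/
import Mathlib

section
/- Let q be a prime power, let Q_n be a uniformly random monic polynomial of degree n over F_q, and let ω_q(Q) denote the number of distinct monic irreducible divisors of Q. Suppose there is a function Φ : (0,∞) → ℝ such that for every x > 0 there is a constant c_x with |E[x^{ω_q(Q_n)}] · e^{−(x−1) log n} − Φ(x)| ≤ c_x / n for all n ≥ 1 (mod-Poisson convergence at speed log n with remainder O_x(1/n)). Then there exists κ ∈ ℝ such that for every x > 0, Φ(x) = (e^{κ(x−1)} / Γ(x)) · ∏_{P} (1 + (x−1)/q^{deg P}) e^{−(x−1)/q^{deg P}}, the product running over all monic irreducible polynomials P of F_q[X] and being convergent. -/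
open Polynomial

/-- The number of distinct monic irreducible divisors of a polynomial over a field. -/
noncomputable def omegaPoly {F : Type*} [Field F] (Q : Polynomial F) : ℕ :=
  Nat.card {P : Polynomial F // P.Monic ∧ Irreducible P ∧ P ∣ Q}

/-- The monic polynomial of degree `n` over `F` with lower-order coefficients `a`:
`X^n + ∑_{i<n} a_i X^i`. Uniform choice of `a` gives the uniformly random monic
polynomial of degree `n`. -/
noncomputable def monicOf {F : Type*} [Field F] (n : ℕ) (a : Fin n → F) : Polynomial F :=
  X ^ n + ∑ i : Fin n, C (a i) * X ^ (i : ℕ)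


/-- Coefficients of `(1-t)^{-x}`. -/
noncomputable def binC (x : ℝ) (n : ℕ) : ℝ := (∏ j ∈ Finset.range n, (x + j)) / n.factorial

lemma binC_pos {x : ℝ} (hx : 0 < x) (n : ℕ) : 0 < binC x n := by
  unfold binC
  have : 0 < ∏ j ∈ Finset.range n, (x + (j : ℝ)) := Finset.prod_pos fun j _ => by positivity
  positivity

lemma binC_eq (x : ℝ) (n : ℕ) : Ring.choose (x + n - 1) n = binC x n := by
  have h1 : Ring.choose (x + n - 1) n = Ring.multichoose x n := by
    rw [Ring.choose]; congr 1; ring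
  have h2 := Ring.factorial_nsmul_multichoose_eq_ascPochhammer x n
  have h3 : (ascPochhammer ℕ n).smeval x = ∏ j ∈ Finset.range n, (x + j) := by
    rw [ascPochhammer_smeval_eq_eval]
    induction n with
    | zero => simp
    | succ n ih => 
      rw [ascPochhammer_succ_eval, Finset.prod_range_succ, ih]
      · simp [Ring.choose]; congr 1; ring
      · exact Ring.factorial_nsmul_multichoose_eq_ascPochhammer x n
  rw [h1, binC, ← h3, ← h2, nsmul_eq_mul]
  field_simp

lemma hasSum_binC (x : ℝ) {t : ℝ} (ht0 : 0 ≤ t) (ht1 : t < 1) :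
    HasSum (fun n => binC x n * t ^ n) (1 / (1 - t) ^ x) := by
  have h := (Real.one_div_one_sub_rpow_hasFPowerSeriesOnBall_zero x).hasSum (y := t) (by
    rw [Metric.mem_eball, edist_eq_enorm_sub, sub_zero, Real.enorm_eq_ofReal ht0]
    simpa using ht1)
  rw [zero_add] at h
  convert! h using 2 with n
  simp [FormalMultilinearSeries.ofScalars, binC_eq]

lemma tendsto_binC {x : ℝ} (hx : 0 < x) :
    Filter.Tendsto (fun n : ℕ => Real.exp ((x - 1) * Real.log n) / binC x n) Filter.atTop
      (nhds (Real.Gamma x)) := by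
  have h1 := Real.GammaSeq_tendsto_Gamma x
  have h2 : Filter.Tendsto (fun n : ℕ => (x + n) / n : ℕ → ℝ) Filter.atTop (nhds 1) := by
    have : Filter.Tendsto (fun n : ℕ => x / n + 1 : ℕ → ℝ) Filter.atTop (nhds (0 + 1)) :=
      (tendsto_const_div_atTop_nhds_zero_nat x).add_const 1
    rw [zero_add] at this
    refine this.congr' ?_
    filter_upwards [Filter.eventually_gt_atTop 0] with n hn
    have : (0 : ℝ) < n := by exact_mod_cast hn
    field_simp
  have h3 := h1.mul h2
  rw [mul_one] at h3
  refine h3.congr' ?_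
  filter_upwards [Filter.eventually_gt_atTop 0] with n hn
  have hn' : (0 : ℝ) < n := by exact_mod_cast hn
  have hp : 0 < ∏ j ∈ Finset.range n, (x + (j : ℝ)) := Finset.prod_pos fun j _ => by positivity
  have e : Real.exp ((x - 1) * Real.log n) = (n : ℝ) ^ x / n := by
    rw [mul_comm, ← Real.rpow_def_of_pos hn', Real.rpow_sub_one hn'.ne']
  rw [e, Real.GammaSeq, binC, Finset.prod_range_succ]
  have : 0 < x + n := by positivity
  field_simp

/-- Abelian lemma. -/
lemma abelian {x : ℝ} (hx : 0 < x) (a : ℕ → ℝ) (L : ℝ)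
    (h : Filter.Tendsto (fun n => a n / binC x n) Filter.atTop (nhds L)) :
    (∀ t : ℝ, 0 ≤ t → t < 1 → Summable (fun n => a n * t ^ n)) ∧
    Filter.Tendsto (fun t : ℝ => (1 - t) ^ x * ∑' n, a n * t ^ n)
      (nhdsWithin 1 (Set.Ioo 0 1)) (nhds L) := by
  have hb := binC_pos hx
  have hs : ∀ t : ℝ, 0 ≤ t → t < 1 → Summable (fun n => a n * t ^ n) := by
    intro t h0 h1
    have hO : a =O[Filter.atTop] binC x := by
      refine Asymptotics.isBigO_of_div_tendsto_nhds ?_ L h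
      exact Filter.Eventually.of_forall fun n hn => absurd hn (hb n).ne'
    exact summable_of_isBigO_nat (hasSum_binC x h0 h1).summable
      (hO.mul (Asymptotics.isBigO_refl _ _))
  refine ⟨hs, ?_⟩
  rw [Metric.tendsto_nhds]
  intro ε hε
  obtain ⟨N, hN⟩ := (Metric.tendsto_atTop.1 h) (ε / 2) (by positivity)
  set K : ℝ := ∑ n ∈ Finset.range N, |a n - L * binC x n| with hK
  have hlim : Filter.Tendsto (fun t : ℝ => (1 - t) ^ x * K) (nhdsWithin 1 (Set.Ioo 0 1))
      (nhds 0) := by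
    have : ContinuousAt (fun t : ℝ => (1 - t) ^ x * K) 1 := by
      refine ContinuousAt.mul ?_ continuousAt_const
      exact ContinuousAt.rpow_const (by fun_prop) (Or.inr hx.le)
    have h2 := this.tendsto
    simp only [sub_self, Real.zero_rpow hx.ne', zero_mul] at h2
    exact h2.mono_left nhdsWithin_le_nhds
  filter_upwards [hlim.eventually (gt_mem_nhds (half_pos hε)), self_mem_nhdsWithin] with t ht1 ht2
  obtain ⟨h0, h1⟩ := ht2
  have hpos : 0 < (1 - t) ^ x := Real.rpow_pos_of_pos (by linarith) x
  have hB := hasSum_binC x h0.le h1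
  have hA := (hs t h0.le h1).hasSum
  have hD := hA.sub (hB.mul_left L)
  have hbound : ∀ n, |a n * t ^ n - L * (binC x n * t ^ n)| ≤
      (if n ∈ Finset.range N then |a n - L * binC x n| else 0) + ε / 2 * (binC x n * t ^ n) := by
    intro n
    have hbt : 0 ≤ ε / 2 * (binC x n * t ^ n) := by have := hb n; positivity
    have e : a n * t ^ n - L * (binC x n * t ^ n) = (a n - L * binC x n) * t ^ n := by ring
    rw [e, abs_mul, abs_of_pos (pow_pos h0 n)]
    split_ifs with hn
    · have : t ^ n ≤ 1 := pow_le_one₀ h0.le h1.le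
      nlinarith [abs_nonneg (a n - L * binC x n)]
    · have hn' : N ≤ n := by simpa using hn
      have := hN n hn'
      rw [Real.dist_eq] at this
      have h3 : |a n - L * binC x n| ≤ ε / 2 * binC x n := by
        have e2 : a n - L * binC x n = (a n / binC x n - L) * binC x n := by
          have := (hb n).ne'; field_simp
        rw [e2, abs_mul, abs_of_pos (hb n)]
        exact mul_le_mul_of_nonneg_right this.le (hb n).le
      have := mul_le_mul_of_nonneg_right h3 (pow_pos h0 n).le
      linarith
  have hR : HasSum (fun n => (if n ∈ Finset.range N then |a n - L * binC x n| else 0) +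
      ε / 2 * (binC x n * t ^ n)) (K + ε / 2 * (1 / (1 - t) ^ x)) := by
    refine HasSum.add ?_ (hB.mul_left _)
    have := hasSum_sum_of_ne_finset_zero (f := fun n => if n ∈ Finset.range N then |a n - L * binC x n| else 0) (L := SummationFilter.unconditional ℕ) (s := Finset.range N) (fun b hb => by simp only [hb, if_false])
    convert this using 1
    rw [hK]
    exact Finset.sum_congr rfl fun n hn => by simp only [hn, if_true]
  have key : |(∑' n, a n * t ^ n) - L * (1 / (1 - t) ^ x)| ≤ K + ε / 2 * (1 / (1 - t) ^ x) := by
    rw [abs_le]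
    constructor
    · have := hasSum_le (fun n => (abs_le.1 (hbound n)).1) hR.neg hD
      exact this
    · exact hasSum_le (fun n => (abs_le.1 (hbound n)).2) hD hR
  rw [Real.dist_eq]
  have e : (1 - t) ^ x * (∑' n, a n * t ^ n) - L =
      (1 - t) ^ x * ((∑' n, a n * t ^ n) - L * (1 / (1 - t) ^ x)) := by field_simp
  rw [e, abs_mul, abs_of_pos hpos]
  have := mul_le_mul_of_nonneg_left key hpos.le
  have e2 : (1 - t) ^ x * (K + ε / 2 * (1 / (1 - t) ^ x)) = (1 - t) ^ x * K + ε / 2 := by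
    field_simp
  linarith

/-- Local Euler factor. -/
noncomputable def locG (x v : ℝ) (k : ℕ) : ℝ := if k = 0 then 1 else x * v ^ k

lemma hasSum_locG (x : ℝ) {v : ℝ} (h0 : 0 ≤ v) (h1 : v < 1) :
    HasSum (locG x v) ((1 + (x - 1) * v) / (1 - v)) := by
  have h := ((hasSum_geometric_of_lt_one h0 h1).mul_left x).add (hasSum_ite_eq (0 : ℕ) (1 - x))
  convert! h using 1
  · ext k
    unfold locG
    split_ifs with hk
    · simp [hk]
    · simp
  · have : 0 < 1 - v := by linarith
    field_simp; ring

lemma prod_locG {I : Type*} (x : ℝ) (v : I → ℝ) (S : Finset I) (N : ℕ) :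
    ∏ i ∈ S, ∑ k ∈ Finset.range N, locG x (v i) k =
      ∑ e ∈ S.finsupp (fun _ => Finset.range N), e.prod (fun i k => locG x (v i) k) := by
  classical
  rw [Finset.finsupp, Finset.sum_map, Finset.prod_sum]
  refine Finset.sum_congr (by congr!) fun p hp => ?_
  rw [Function.Embedding.coeFn_mk,
    Finsupp.prod_of_support_subset _ (Finsupp.support_indicator_subset _ _) _
    (fun i _ => by simp [locG]), ← Finset.prod_attach S]
  refine Finset.prod_congr rfl fun i _ => ?_
  simp [Finsupp.indicator_of_mem i.2]

lemma euler_abs {I : Type*} {x : ℝ} (hx : 0 < x) (v : I → ℝ) (h0 : ∀ i, 0 ≤ v i)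
    (h1 : ∀ i, v i < 1) (W : ℝ)
    (hW : HasSum (fun e : I →₀ ℕ => e.prod (fun i k => locG x (v i) k)) W) :
    HasProd (fun i => (1 + (x - 1) * v i) / (1 - v i)) W := by
  classical
  have hg : ∀ i k, 0 ≤ locG x (v i) k := by
    intro i k; unfold locG; have := h0 i; split_ifs <;> positivity
  have hf : ∀ e : I →₀ ℕ, 0 ≤ e.prod (fun i k => locG x (v i) k) := fun e =>
    Finset.prod_nonneg fun i _ => hg _ _
  have hG1 : ∀ i, 1 ≤ (1 + (x - 1) * v i) / (1 - v i) := by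
    intro i
    have := h1 i; have := h0 i
    rw [le_div_iff₀ (by linarith)]
    nlinarith
  have : Filter.Tendsto (fun S : Finset I => ∏ i ∈ S, (1 + (x - 1) * v i) / (1 - v i))
      Filter.atTop (nhds W) := by
    refine tendsto_atTop_isLUB ?_ ⟨?_, ?_⟩
    · intro S T hST
      exact Finset.prod_mono_set_of_one_le hG1 hST
    · rintro _ ⟨S, rfl⟩
      have hl : Filter.Tendsto (fun N => ∏ i ∈ S, ∑ k ∈ Finset.range N, locG x (v i) k)
          Filter.atTop (nhds (∏ i ∈ S, (1 + (x - 1) * v i) / (1 - v i))) :=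
        tendsto_finsetProd _ fun i _ => (hasSum_locG x (h0 i) (h1 i)).tendsto_sum_nat
      refine le_of_tendsto' hl fun N => ?_
      rw [prod_locG]
      exact sum_le_hasSum _ (fun e _ => hf e) hW
    · intro B hB
      refine hasSum_le_of_sum_le hW fun T => ?_
      let S : Finset I := T.biUnion fun e => e.support
      let N : ℕ := (T.sup fun e => e.support.sup e) + 1
      have hsub : T ⊆ S.finsupp (fun _ => Finset.range N) := by
        intro e he
        rw [Finset.mem_finsupp_iff]
        refine ⟨Finset.subset_biUnion_of_mem (fun e : I →₀ ℕ => e.support) he, fun i _ => ?_⟩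
        rw [Finset.mem_range]
        by_cases hi : i ∈ e.support
        · have a1 := Finset.le_sup (f := e) hi
          have a2 := Finset.le_sup (f := fun e : I →₀ ℕ => e.support.sup e) he
          exact Nat.lt_succ_of_le (a1.trans a2)
        · rw [Finsupp.notMem_support_iff.1 hi]; exact Nat.succ_pos _
      calc _ ≤ _ := Finset.sum_le_sum_of_subset_of_nonneg hsub fun e _ _ => hf e
        _ = _ := (prod_locG x v S N).symm
        _ ≤ ∏ i ∈ S, (1 + (x - 1) * v i) / (1 - v i) :=
          Finset.prod_le_prod (fun i _ => Finset.sum_nonneg fun k _ => hg i k) fun i _ =>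
            sum_le_hasSum _ (fun k _ => hg i k) (hasSum_locG x (h0 i) (h1 i))
        _ ≤ B := hB ⟨S, rfl⟩
  simpa [HasProd] using this

/-- Monic irreducibles. -/
abbrev MonIrr (F : Type*) [Field F] := {P : Polynomial F // P.Monic ∧ Irreducible P}

/-- Product of monic irreducibles with multiplicities. -/
noncomputable def phiE {F : Type*} [Field F] (e : MonIrr F →₀ ℕ) : Polynomial F :=
  e.prod fun P k => (P : Polynomial F) ^ k

lemma phiE_monic {F : Type*} [Field F] (e : MonIrr F →₀ ℕ) : (phiE e).Monic :=
  monic_prod_of_monic _ _ fun P _ => P.2.1.pow _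

lemma phiE_natDegree {F : Type*} [Field F] (e : MonIrr F →₀ ℕ) :
    (phiE e).natDegree = e.sum fun P k => k * (P : Polynomial F).natDegree := by
  unfold phiE Finsupp.prod Finsupp.sum
  rw [natDegree_prod_of_monic _ _ fun P _ => P.2.1.pow _]
  exact Finset.sum_congr rfl fun P _ => P.2.1.natDegree_pow _

lemma dvd_phiE {F : Type*} [Field F] (e : MonIrr F →₀ ℕ) (P : MonIrr F) :
    (P : Polynomial F) ∣ phiE e ↔ P ∈ e.support := by
  constructor
  · intro h
    obtain ⟨R, hR, hd⟩ := (Prime.dvd_finsetProd_iff P.2.2.prime _).1 h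
    have h2 := P.2.2.prime.dvd_of_dvd_pow hd
    have h3 := P.2.2.associated_of_dvd R.2.2 h2
    have h4 := eq_of_monic_of_associated P.2.1 R.2.1 h3
    rwa [Subtype.ext h4]
  · intro h
    refine dvd_trans (dvd_pow_self _ (Finsupp.mem_support_iff.1 h)) (Finset.dvd_prod_of_mem _ h)

lemma omega_phiE {F : Type*} [Field F] (e : MonIrr F →₀ ℕ) :
    omegaPoly (phiE e) = e.support.card := by
  unfold omegaPoly
  rw [← Nat.card_eq_finsetCard]
  refine Nat.card_congr ⟨fun P => ⟨⟨P.1, P.2.1, P.2.2.1⟩, (dvd_phiE e _).1 P.2.2.2⟩,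
    fun P => ⟨P.1.1, P.1.2.1, P.1.2.2, (dvd_phiE e _).2 P.2⟩, fun P => rfl, fun P => rfl⟩

lemma phiE_injective {F : Type*} [Field F] : Function.Injective (phiE (F := F)) := by
  classical
  intro e e' h
  have key : ∀ e : MonIrr F →₀ ℕ, UniqueFactorizationMonoid.normalizedFactors (phiE e) =
      (Finsupp.toMultiset e).map Subtype.val := by
    intro e
    have h1 : phiE e = ((Finsupp.toMultiset e).map Subtype.val).prod := by
      rw [Finsupp.toMultiset_map, Finsupp.prod_toMultiset, Finsupp.prod_mapDomain_index]
      · rfl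
      · simp
      · intros; rw [pow_add]
    rw [h1, UniqueFactorizationMonoid.normalizedFactors_prod_eq]
    · rw [Multiset.map_map]
      exact Multiset.map_congr rfl fun P _ => P.2.1.normalize_eq_self
    · intro a ha
      obtain ⟨P, _, rfl⟩ := Multiset.mem_map.1 ha
      exact P.2.2
  have h2 := key e
  rw [h, key e'] at h2
  have h3 := congrArg Multiset.toFinsupp (Multiset.map_injective Subtype.val_injective h2)
  rw [Finsupp.toMultiset_toFinsupp, Finsupp.toMultiset_toFinsupp] at h3
  exact h3.symm

lemma phiE_surj {F : Type*} [Field F] (Q : Polynomial F) (hQ : Q.Monic) :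
    ∃ e : MonIrr F →₀ ℕ, phiE e = Q := by
  classical
  let m := UniqueFactorizationMonoid.normalizedFactors Q
  have hm : ∀ P ∈ m, P.Monic ∧ Irreducible P := fun P hP => by
    have h1 := UniqueFactorizationMonoid.irreducible_of_normalized_factor P hP
    refine ⟨?_, h1⟩
    rw [← UniqueFactorizationMonoid.normalize_normalized_factor P hP]
    exact monic_normalize h1.ne_zero
  let m' : Multiset (MonIrr F) := m.attach.map fun P => ⟨P.1, hm P.1 P.2⟩
  refine ⟨Multiset.toFinsupp m', ?_⟩
  have h1 : phiE (Multiset.toFinsupp m') = (m'.map Subtype.val).prod := by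
    conv_rhs => rw [← Multiset.toFinsupp_toMultiset m', Finsupp.toMultiset_map, Finsupp.prod_toMultiset, Finsupp.prod_mapDomain_index (by simp) (by intros; rw [pow_add])]
    rfl
  rw [h1]
  have h2 : m'.map Subtype.val = m := by
    simp only [m', Multiset.map_map, Function.comp_def]
    exact Multiset.attach_map_val m
  rw [h2]
  exact eq_of_monic_of_associated (by simpa using monic_multiset_prod_of_monic m id fun P hP => (hm P hP).1) hQ
    (UniqueFactorizationMonoid.prod_normalizedFactors hQ.ne_zero)

lemma degree_low {F : Type*} [Field F] (n : ℕ) (a : Fin n → F) :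
    (∑ i : Fin n, C (a i) * (X : F[X]) ^ (i : ℕ)).degree < (n : WithBot ℕ) :=
  degree_sum_fin_lt a

lemma monicOf_monic {F : Type*} [Field F] (n : ℕ) (a : Fin n → F) : (monicOf n a).Monic :=
  monic_X_pow_add (degree_low n a)

lemma monicOf_natDegree {F : Type*} [Field F] (n : ℕ) (a : Fin n → F) :
    (monicOf n a).natDegree = n := by
  have : (monicOf n a).degree = n := by
    rw [monicOf, degree_add_eq_left_of_degree_lt, degree_X_pow]
    rw [degree_X_pow]
    exact degree_low n a
  exact natDegree_eq_of_degree_eq_some this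

lemma monicOf_coeff {F : Type*} [Field F] (n : ℕ) (a : Fin n → F) (i : Fin n) :
    (monicOf n a).coeff i = a i := by
  have : ∀ j : Fin n, ((i : ℕ) = (j : ℕ)) ↔ i = j := fun j => by rw [Fin.ext_iff]
  simp [monicOf, coeff_X_pow, i.2.ne, this]

lemma monicOf_bij {F : Type*} [Field F] : Function.Bijective
    (fun p : (Σ n : ℕ, (Fin n → F)) => (⟨monicOf p.1 p.2, monicOf_monic _ _⟩ : {Q : Polynomial F // Q.Monic})) := by
  constructor
  · rintro ⟨n, a⟩ ⟨m, b⟩ h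
    have h' : monicOf n a = monicOf m b := congrArg Subtype.val h
    have hn : n = m := by rw [← monicOf_natDegree n a, h', monicOf_natDegree]
    subst hn
    congr 1
    ext i
    rw [← monicOf_coeff n a i, h', monicOf_coeff]
  · rintro ⟨Q, hQ⟩
    refine ⟨⟨Q.natDegree, fun i => Q.coeff i⟩, Subtype.ext ?_⟩
    refine Eq.trans ?_ hQ.as_sum.symm
    simp only [monicOf]
    congr 1
    exact Fin.sum_univ_eq_sum_range (fun i => C (Q.coeff i) * X ^ i) _

lemma phiE_bij {F : Type*} [Field F] : Function.Bijective
    (fun e : MonIrr F →₀ ℕ => (⟨phiE e, phiE_monic e⟩ : {Q : Polynomial F // Q.Monic})) :=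
  ⟨fun _ _ h => phiE_injective (congrArg Subtype.val h), fun Q => by
    obtain ⟨e, he⟩ := phiE_surj Q.1 Q.2
    exact ⟨e, Subtype.ext he⟩⟩

lemma weight_phiE {F : Type*} [Field F] (x s : ℝ) (e : MonIrr F →₀ ℕ) :
    x ^ omegaPoly (phiE e) * s ^ (phiE e).natDegree =
      e.prod (fun P k => locG x (s ^ (P : Polynomial F).natDegree) k) := by
  rw [omega_phiE, phiE_natDegree]
  unfold Finsupp.prod Finsupp.sum
  rw [← Finset.prod_const, ← Finset.prod_pow_eq_pow_sum, ← Finset.prod_mul_distrib]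
  refine Finset.prod_congr rfl fun P hP => ?_
  simp only [locG]
  rw [if_neg (Finsupp.mem_support_iff.1 hP), ← pow_mul, mul_comm (e P)]

lemma hasSum_weight {F : Type*} [Field F] [Fintype F] {x t : ℝ} (hx : 0 < x) (ht : 0 ≤ t)
    (hs : Summable fun n : ℕ => (∑ a : Fin n → F, x ^ omegaPoly (monicOf n a)) /
      (Fintype.card F : ℝ) ^ n * t ^ n) :
    HasSum (fun e : MonIrr F →₀ ℕ =>
      e.prod (fun P k => locG x ((t / Fintype.card F) ^ (P : Polynomial F).natDegree) k))
      (∑' n : ℕ, (∑ a : Fin n → F, x ^ omegaPoly (monicOf n a)) /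
      (Fintype.card F : ℝ) ^ n * t ^ n) := by
  set s : ℝ := t / Fintype.card F with hsdef
  have hs0 : 0 ≤ s := by positivity
  let w : {Q : Polynomial F // Q.Monic} → ℝ := fun Q => x ^ omegaPoly Q.1 * s ^ Q.1.natDegree
  have hsum : ∀ n : ℕ, ∑ a : Fin n → F, x ^ omegaPoly (monicOf n a) * s ^ n =
      (∑ a : Fin n → F, x ^ omegaPoly (monicOf n a)) / (Fintype.card F : ℝ) ^ n * t ^ n := by
    intro n
    rw [← Finset.sum_mul, hsdef, div_pow]; ring
  let g : (Σ n : ℕ, (Fin n → F)) → ℝ := fun p => x ^ omegaPoly (monicOf p.1 p.2) * s ^ p.1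
  have hg : Summable g := by
    rw [summable_sigma_of_nonneg (fun p => by positivity)]
    refine ⟨fun n => (hasSum_fintype _).summable, ?_⟩
    refine hs.congr fun n => ?_
    rw [tsum_fintype, ← hsum]
  have h1 : HasSum g (∑' n : ℕ, (∑ a : Fin n → F, x ^ omegaPoly (monicOf n a)) /
      (Fintype.card F : ℝ) ^ n * t ^ n) := by
    rw [hg.hasSum_iff, hg.tsum_sigma]
    refine tsum_congr fun n => ?_
    rw [tsum_fintype, ← hsum]
  have h2 := (Equiv.ofBijective _ (monicOf_bij (F := F))).hasSum_iff (f := w)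
    (a := ∑' n : ℕ, (∑ a : Fin n → F, x ^ omegaPoly (monicOf n a)) /
      (Fintype.card F : ℝ) ^ n * t ^ n)
  have h3 := (Equiv.ofBijective _ (phiE_bij (F := F))).hasSum_iff (f := w)
    (a := ∑' n : ℕ, (∑ a : Fin n → F, x ^ omegaPoly (monicOf n a)) /
      (Fintype.card F : ℝ) ^ n * t ^ n)
  have h4 : w ∘ (Equiv.ofBijective _ (monicOf_bij (F := F))) = g := by
    funext p
    simp [w, g, monicOf_natDegree]
  rw [h4] at h2
  have h5 := h3.2 (h2.1 h1)
  convert! h5 using 1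
  funext e
  exact (weight_phiE x s e).symm

/-- `log(1+y) - y`. -/
noncomputable def ell (y : ℝ) : ℝ := Real.log (1 + y) - y

lemma ell_bound {y : ℝ} (hy : -(1 / 2) ≤ y) : |ell y| ≤ 2 * y ^ 2 := by
  have hp : 0 < 1 + y := by linarith
  have h1 := Real.log_le_sub_one_of_pos hp
  have h2 := Real.one_sub_inv_le_log_of_pos hp
  have h3 : y - 2 * y ^ 2 ≤ 1 - (1 + y)⁻¹ := by
    have : 1 - (1 + y)⁻¹ - (y - 2 * y ^ 2) = y ^ 2 * (1 + 2 * y) / (1 + y) := by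
      field_simp; ring
    have : 0 ≤ y ^ 2 * (1 + 2 * y) / (1 + y) :=
      div_nonneg (mul_nonneg (sq_nonneg _) (by linarith)) hp.le
    linarith
  unfold ell
  rw [abs_le]
  constructor
  · linarith
  · nlinarith [sq_nonneg y]

lemma ell_cont {y : ℝ} (hy : -(1 / 2) ≤ y) : ContinuousAt ell y := by
  unfold ell
  have : 1 + y ≠ 0 := by linarith
  fun_prop (disch := assumption)

lemma omega_sum_one {F : Type*} [Field F] [Fintype F] (n : ℕ) :
    (∑ a : Fin n → F, (1 : ℝ) ^ omegaPoly (monicOf n a)) / (Fintype.card F : ℝ) ^ n = 1 := by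
  have : (0 : ℝ) < Fintype.card F := by exact_mod_cast Fintype.card_pos
  simp
  
lemma card_ge_two (F : Type*) [Field F] [Fintype F] : (2 : ℝ) ≤ Fintype.card F := by
  exact_mod_cast Fintype.one_lt_card

lemma summable_irr (F : Type*) [Field F] [Fintype F] :
    Summable fun P : MonIrr F => ((1 / (Fintype.card F : ℝ)) ^ (P : Polynomial F).natDegree) ^ 2 := by
  have hq := card_ge_two F
  have hq0 : (0 : ℝ) < Fintype.card F := by linarith
  have h := hasSum_weight (F := F) (x := 1) (t := 1 / Fintype.card F) one_pos (by positivity) (by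
    simp only [omega_sum_one, one_mul]
    refine summable_geometric_of_lt_one (by positivity) ?_
    rw [div_lt_one hq0]; linarith)
  have h2 := h.summable.comp_injective (i := fun P : MonIrr F => Finsupp.single P 1)
    (Finsupp.single_left_injective one_ne_zero)
  refine h2.congr fun P => ?_
  simp only [Function.comp]
  rw [Finsupp.prod_single_index (by simp [locG])]
  simp only [locG, one_ne_zero, if_false, one_mul, pow_one]
  rw [← pow_mul, mul_comm _ 2, pow_mul]
  congr 1
  field_simp

section main
variable {F : Type*} [Field F] [Fintype F]

/-- The local parameter `(t/q)^{deg P}`. -/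
noncomputable def uP (t : ℝ) (P : MonIrr F) : ℝ :=
  (t / Fintype.card F) ^ (P : Polynomial F).natDegree

lemma natDegree_pos_irr (P : MonIrr F) : 1 ≤ (P : Polynomial F).natDegree :=
  P.2.2.natDegree_pos

lemma uP_nonneg {t : ℝ} (h0 : 0 ≤ t) (P : MonIrr F) : 0 ≤ uP t P := by
  unfold uP; positivity

lemma uP_le {t : ℝ} (h0 : 0 ≤ t) (h1 : t ≤ 1) (P : MonIrr F) : uP t P ≤ uP 1 P := by
  unfold uP
  gcongr

lemma uP_le_half {t : ℝ} (h0 : 0 ≤ t) (h1 : t ≤ 1) (P : MonIrr F) : uP t P ≤ 1 / 2 := by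
  refine (uP_le h0 h1 P).trans ?_
  unfold uP
  have hq := card_ge_two F
  have h2 : 1 / (Fintype.card F : ℝ) ≤ 1 / 2 := by gcongr
  have h3 : 0 ≤ 1 / (Fintype.card F : ℝ) := by positivity
  calc _ ≤ (1 / (Fintype.card F : ℝ)) ^ 1 :=
        pow_le_pow_of_le_one h3 (by linarith) (natDegree_pos_irr P)
    _ ≤ _ := by simpa using h2

/-- log of the normalized local factor -/
noncomputable def lam (x u : ℝ) : ℝ := (x - 1) * ell (-u) + ell ((x - 1) * u)

lemma arg_ge {x u : ℝ} (hx : 0 < x) (h0 : 0 ≤ u) (h1 : u ≤ 1 / 2) : -(1 / 2) ≤ (x - 1) * u := by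
  nlinarith [mul_nonneg hx.le h0]

lemma lam_bound {x u v : ℝ} (hx : 0 < x) (h0 : 0 ≤ u) (huv : u ≤ v) (h1 : u ≤ 1 / 2) :
    ‖lam x u‖ ≤ 2 * (|x - 1| + (x - 1) ^ 2) * v ^ 2 := by
  rw [Real.norm_eq_abs, lam]
  have a1 := ell_bound (y := -u) (by linarith)
  have a2 := ell_bound (arg_ge hx h0 h1)
  have a3 : |x - 1| * |ell (-u)| ≤ |x - 1| * (2 * (-u) ^ 2) := by gcongr
  have a4 : u ^ 2 ≤ v ^ 2 := by gcongr
  have a5 : 2 * (|x - 1| + (x - 1) ^ 2) * u ^ 2 ≤ 2 * (|x - 1| + (x - 1) ^ 2) * v ^ 2 := by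
    gcongr
  calc _ ≤ |(x - 1) * ell (-u)| + |ell ((x - 1) * u)| := abs_add_le _ _
    _ ≤ |x - 1| * (2 * (-u) ^ 2) + 2 * ((x - 1) * u) ^ 2 := by
      rw [abs_mul]; linarith
    _ = 2 * (|x - 1| + (x - 1) ^ 2) * u ^ 2 := by ring
    _ ≤ _ := a5

lemma hasSum_log_of_hasProd {I : Type*} {f : I → ℝ} {W : ℝ} (hf : ∀ i, 0 < f i) (hW : 0 < W)
    (h : HasProd f W) : HasSum (fun i => Real.log (f i)) (Real.log W) := by
  have h2 := (Real.continuousAt_log hW.ne').tendsto.comp h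
  unfold HasSum
  refine h2.congr fun S => ?_
  exact Real.log_prod fun i _ => (hf i).ne'

lemma euler_log {x t : ℝ} (hx : 0 < x) (h0 : 0 < t) (h1 : t < 1)
    (hs : Summable fun n : ℕ => (∑ a : Fin n → F, x ^ omegaPoly (monicOf n a)) /
      (Fintype.card F : ℝ) ^ n * t ^ n) :
    (1 - t) ^ x * ∑' n : ℕ, (∑ a : Fin n → F, x ^ omegaPoly (monicOf n a)) /
      (Fintype.card F : ℝ) ^ n * t ^ n = Real.exp (∑' P : MonIrr F, lam x (uP t P)) := by
  have hu0 : ∀ P : MonIrr F, 0 ≤ uP t P := uP_nonneg h0.le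
  have hu2 : ∀ P : MonIrr F, uP t P ≤ 1 / 2 := uP_le_half h0.le h1.le
  have hu1 : ∀ P : MonIrr F, uP t P < 1 := fun P => by linarith [hu2 P]
  have hone : ∀ P : MonIrr F, 0 < 1 - uP t P := fun P => by linarith [hu2 P]
  have hnum : ∀ P : MonIrr F, 0 < 1 + (x - 1) * uP t P := fun P => by
    linarith [arg_ge hx (hu0 P) (hu2 P)]
  have p1 := euler_abs hx (uP t) hu0 hu1 _ (hasSum_weight (F := F) hx h0.le hs)
  have hgeo := hasSum_geometric_of_lt_one h0.le h1
  have p2 := euler_abs one_pos (uP t) hu0 hu1 _ (hasSum_weight (F := F) one_pos h0.le (by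
    simp only [omega_sum_one, one_mul]; exact hgeo.summable))
  simp only [omega_sum_one, one_mul, sub_self, zero_mul, add_zero, hgeo.tsum_eq] at p2
  set W := ∑' n : ℕ, (∑ a : Fin n → F, x ^ omegaPoly (monicOf n a)) /
      (Fintype.card F : ℝ) ^ n * t ^ n with hWdef
  have hW : 0 < W := by
    refine hs.tsum_pos (fun n => by positivity) 0 ?_
    simp only [pow_zero, div_one, mul_one]
    exact Finset.sum_pos (fun a _ => by positivity) Finset.univ_nonempty
  have h1t : 0 < 1 - t := by linarith
  have l1 := hasSum_log_of_hasProd (fun P => div_pos (hnum P) (hone P)) hW p1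
  have l2 := hasSum_log_of_hasProd (fun P => div_pos one_pos (hone P)) (by positivity) p2
  have l3 := l1.sub (l2.mul_left x)
  have e : ∀ P : MonIrr F, Real.log ((1 + (x - 1) * uP t P) / (1 - uP t P)) -
      x * Real.log (1 / (1 - uP t P)) = lam x (uP t P) := by
    intro P
    rw [Real.log_div (hnum P).ne' (hone P).ne', Real.log_div one_ne_zero (hone P).ne',
      Real.log_one, lam, ell, ell, ← sub_eq_add_neg]
    ring
  simp only [e] at l3
  rw [l3.tsum_eq, Real.log_inv, Real.rpow_def_of_pos h1t]
  rw [show Real.log W - x * -Real.log (1 - t) = Real.log (1 - t) * x + Real.log W by ring,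
    Real.exp_add, Real.exp_log hW]

lemma summable_uP_sq : Summable fun P : MonIrr F => (uP 1 P) ^ 2 := summable_irr F

lemma tendsto_lam {x : ℝ} (hx : 0 < x) :
    Filter.Tendsto (fun t : ℝ => ∑' P : MonIrr F, lam x (uP t P))
      (nhdsWithin 1 (Set.Ioo 0 1)) (nhds (∑' P : MonIrr F, lam x (uP 1 P))) := by
  refine tendsto_tsum_of_dominated_convergence
    (bound := fun P => 2 * (|x - 1| + (x - 1) ^ 2) * (uP 1 P) ^ 2)
    (summable_uP_sq.mul_left _) ?_ ?_
  · intro P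
    have hc : ContinuousAt (fun t : ℝ => lam x (uP t P)) 1 := by
      have hu : ContinuousAt (fun t : ℝ => uP t P) 1 := by unfold uP; fun_prop
      have h0 := uP_nonneg zero_le_one P
      have h2 := uP_le_half zero_le_one le_rfl P
      unfold lam
      refine ContinuousAt.add (ContinuousAt.mul continuousAt_const ?_) ?_
      · exact ContinuousAt.comp (f := fun t => - uP t P) (ell_cont (by linarith)) hu.neg
      · exact ContinuousAt.comp (f := fun t => (x - 1) * uP t P) (ell_cont (arg_ge hx h0 h2))
          (continuousAt_const.mul hu)
    exact hc.tendsto.mono_left nhdsWithin_le_nhds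
  · filter_upwards [self_mem_nhdsWithin] with t ht P
    exact lam_bound hx (uP_nonneg ht.1.le P) (uP_le ht.1.le ht.2.le P)
      (uP_le_half ht.1.le ht.2.le P)

end main

/-- If `ω_q(Q_n)` (the number of distinct monic irreducible divisors of a uniformly random
monic polynomial of degree `n` over the finite field `F` with `q` elements) converges in
the mod-Poisson sense at speed `log n` with remainder `O_x(1/n)` to `Φ`, then necessarily
`Φ(x) = e^{κ(x−1)}/Γ(x) · ∏_P (1+(x−1)/q^{deg P}) e^{−(x−1)/q^{deg P}}` for some `κ ∈ ℝ`,
the product running over all monic irreducible polynomials `P` and being convergent. -/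
theorem stmt13 (F : Type*) [Field F] [Fintype F] (Φ : ℝ → ℝ)
    (h : ∀ x : ℝ, 0 < x → ∃ c : ℝ, ∀ n : ℕ, 1 ≤ n →
      |((∑ a : Fin n → F, x ^ omegaPoly (monicOf n a)) / (Fintype.card F : ℝ) ^ n) *
          Real.exp (-(x - 1) * Real.log n) - Φ x|
        ≤ c / n) :
    ∃ κ : ℝ, ∀ x : ℝ, 0 < x →
      Multipliable (fun P : {P : Polynomial F // P.Monic ∧ Irreducible P} =>
        (1 + (x - 1) / (Fintype.card F : ℝ) ^ (P : Polynomial F).natDegree) *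
          Real.exp (-(x - 1) / (Fintype.card F : ℝ) ^ (P : Polynomial F).natDegree)) ∧
      Φ x = Real.exp (κ * (x - 1)) / Real.Gamma x *
        ∏' P : {P : Polynomial F // P.Monic ∧ Irreducible P},
          (1 + (x - 1) / (Fintype.card F : ℝ) ^ (P : Polynomial F).natDegree) *
            Real.exp (-(x - 1) / (Fintype.card F : ℝ) ^ (P : Polynomial F).natDegree) := by
  refine ⟨∑' P : MonIrr F, ell (-uP 1 P), fun x hx => ?_⟩
  have hu0 : ∀ P : MonIrr F, 0 ≤ uP 1 P := uP_nonneg zero_le_one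
  have hu2 : ∀ P : MonIrr F, uP 1 P ≤ 1 / 2 := uP_le_half zero_le_one le_rfl
  have s1 : Summable fun P : MonIrr F => ell (-uP 1 P) := by
    refine Summable.of_norm_bounded (g := fun P => 2 * (uP 1 P) ^ 2)
      (summable_uP_sq.mul_left _) fun P => ?_
    have := ell_bound (y := -uP 1 P) (by linarith [hu2 P])
    rwa [neg_sq] at this
  have s2 : Summable fun P : MonIrr F => ell ((x - 1) * uP 1 P) := by
    refine Summable.of_norm_bounded (g := fun P => 2 * (x - 1) ^ 2 * (uP 1 P) ^ 2)
      (summable_uP_sq.mul_left _) fun P => ?_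
    have := ell_bound (arg_ge hx (hu0 P) (hu2 P))
    rw [mul_pow, ← mul_assoc] at this
    exact this
  have hprod : HasProd (fun P : {P : Polynomial F // P.Monic ∧ Irreducible P} =>
        (1 + (x - 1) / (Fintype.card F : ℝ) ^ (P : Polynomial F).natDegree) *
          Real.exp (-(x - 1) / (Fintype.card F : ℝ) ^ (P : Polynomial F).natDegree))
      (Real.exp (∑' P : MonIrr F, ell ((x - 1) * uP 1 P))) := by
    have := s2.hasSum.rexp
    convert! this using 1
    funext P
    have hp := arg_ge hx (hu0 P) (hu2 P)
    simp only [Function.comp, ell]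
    rw [sub_eq_add_neg (Real.log _), Real.exp_add, Real.exp_log (by linarith)]
    simp only [uP, div_pow, one_pow]
    congr 2
    · ring
    · ring
  refine ⟨hprod.multipliable, ?_⟩
  rw [hprod.tprod_eq]
  obtain ⟨c, hc⟩ := h x hx
  have hΦ : Filter.Tendsto (fun n : ℕ => ((∑ a : Fin n → F, x ^ omegaPoly (monicOf n a)) /
      (Fintype.card F : ℝ) ^ n) * Real.exp (-(x - 1) * Real.log n)) Filter.atTop (nhds (Φ x)) := by
    rw [tendsto_iff_norm_sub_tendsto_zero]
    refine squeeze_zero' (Filter.Eventually.of_forall fun n => norm_nonneg _) ?_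
      (tendsto_const_div_atTop_nhds_zero_nat c)
    filter_upwards [Filter.eventually_ge_atTop 1] with n hn using hc n hn
  have hlim := hΦ.mul (tendsto_binC hx)
  have hlim2 : Filter.Tendsto (fun n : ℕ => ((∑ a : Fin n → F, x ^ omegaPoly (monicOf n a)) /
      (Fintype.card F : ℝ) ^ n) / binC x n) Filter.atTop (nhds (Φ x * Real.Gamma x)) := by
    refine hlim.congr fun n => ?_
    rw [neg_mul, Real.exp_neg]
    have := Real.exp_pos ((x - 1) * Real.log n)
    have := binC_pos hx n
    field_simp
  obtain ⟨hs, hA⟩ := abelian hx _ _ hlim2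
  have hB : Filter.Tendsto (fun t : ℝ => Real.exp (∑' P : MonIrr F, lam x (uP t P)))
      (nhdsWithin 1 (Set.Ioo 0 1)) (nhds (Real.exp (∑' P : MonIrr F, lam x (uP 1 P)))) :=
    (Real.continuous_exp.tendsto _).comp (tendsto_lam hx)
  have hB' : Filter.Tendsto (fun t : ℝ => Real.exp (∑' P : MonIrr F, lam x (uP t P)))
      (nhdsWithin 1 (Set.Ioo 0 1)) (nhds (Φ x * Real.Gamma x)) := by
    refine hA.congr' ?_
    filter_upwards [self_mem_nhdsWithin] with t ht
    exact euler_log hx ht.1 ht.2 (hs t ht.1.le ht.2)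
  have hne : (nhdsWithin (1 : ℝ) (Set.Ioo 0 1)).NeBot := by
    rw [← mem_closure_iff_nhdsWithin_neBot, closure_Ioo (by norm_num)]
    simp
  have heq := tendsto_nhds_unique hB' hB
  have hG := Real.Gamma_pos_of_pos hx
  have hsplit : ∑' P : MonIrr F, lam x (uP 1 P) = (∑' P : MonIrr F, ell (-uP 1 P)) * (x - 1) +
      ∑' P : MonIrr F, ell ((x - 1) * uP 1 P) := by
    simp only [lam]
    rw [(s1.mul_left (x - 1)).tsum_add s2, tsum_mul_left, mul_comm]
  rw [hsplit, Real.exp_add] at heq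
  rw [div_mul_eq_mul_div, eq_div_iff hG.ne', heq]
end

section
/- Let α > 1, let Z_α^{(s)} have the distribution on squarefree positive integers given by P(Z_α^{(s)} = n) = 1/(n^α ζ_{N_s}(α)), and let d_α^{(s)} have the distribution P(d_α^{(s)} = n) = |N_s ∩ [1,n]| · (n^{−α} − (n+1)^{−α}) / ζ_{N_s}(α). Then both (α − 1) log Z_α^{(s)} and (α − 1) log d_α^{(s)} converge in distribution, as α → 1⁺, to the standard exponential distribution Exp(1). -/
open Filter

/-- `zetaSqf α = ∑_{n squarefree} n^{−α}`. -/
noncomputable def zetaSqf (α : ℝ) : ℝ :=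
  ∑' n : ℕ, if Squarefree n then (n : ℝ) ^ (-α) else 0

/-- `sqfCount n = |N_s ∩ [1,n]|`, the number of squarefree integers in `{1,…,n}`. -/
def sqfCount (n : ℕ) : ℕ := ((Finset.Icc 1 n).filter Squarefree).card

/-- Tangent line inequality for `x ^ (-b)`. -/
lemma tangent (b x y : ℝ) (hb : 0 < b) (hx : 0 < x) (hy : 0 < y) :
    y ^ (-b) + b * (y - x) * y ^ (-b - 1) ≤ x ^ (-b) := by
  have h1 : y ^ (-b - 1) = y ^ (-b) / y := by rw [Real.rpow_sub_one hy.ne']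
  have h2 : x ^ (-b) = y ^ (-b) * Real.exp (b * Real.log (y / x)) := by
    rw [Real.rpow_def_of_pos hx, Real.rpow_def_of_pos hy, ← Real.exp_add,
      Real.log_div hy.ne' hx.ne']
    congr 1; ring
  have h3 : 1 - x / y ≤ Real.log (y / x) := by
    have := Real.one_sub_inv_le_log_of_pos (div_pos hy hx)
    rwa [inv_div] at this
  have h4 := Real.add_one_le_exp (b * Real.log (y / x))
  have h5 : 1 + b * (1 - x / y) ≤ Real.exp (b * Real.log (y / x)) := by nlinarith
  rw [h1, h2]
  have h6 : y ^ (-b) + b * (y - x) * (y ^ (-b) / y) = y ^ (-b) * (1 + b * (1 - x / y)) := by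
    field_simp
  rw [h6]
  exact mul_le_mul_of_nonneg_left h5 (Real.rpow_pos_of_pos hy _).le

/-- Truncated zeta sum. -/
noncomputable def zz (α : ℝ) (K : ℕ) : ℝ := ∑ m ∈ Finset.range K, ((m : ℝ) + 1) ^ (-α)

lemma zz_nonneg (α : ℝ) (K : ℕ) : 0 ≤ zz α K :=
  Finset.sum_nonneg fun m _ => by positivity

lemma zz_lower (α : ℝ) (hα : 1 < α) (K : ℕ) :
    1 - ((K : ℝ) + 1) ^ (1 - α) ≤ (α - 1) * zz α K := by
  induction K with
  | zero => simp [zz]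
  | succ K ih =>
    have := tangent (α - 1) ((K : ℝ) + 1 + 1) ((K : ℝ) + 1) (by linarith) (by positivity)
      (by positivity)
    rw [show -(α - 1) = 1 - α by ring, show 1 - α - 1 = -α by ring] at this
    have e : zz α (K + 1) = zz α K + ((K : ℝ) + 1) ^ (-α) := by
      simp [zz, Finset.sum_range_succ]
    rw [e]
    push_cast
    linarith

lemma zz_upper (α : ℝ) (hα : 1 < α) (K : ℕ) :
    (α - 1) * zz α (K + 1) ≤ α - ((K : ℝ) + 1) ^ (1 - α) := by
  induction K with
  | zero => simp [zz]
  | succ K ih =>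
    have := tangent (α - 1) ((K : ℝ) + 1) ((K : ℝ) + 1 + 1) (by linarith) (by positivity)
      (by positivity)
    rw [show -(α - 1) = 1 - α by ring, show 1 - α - 1 = -α by ring] at this
    have e : zz α (K + 1 + 1) = zz α (K + 1) + ((K : ℝ) + 1 + 1) ^ (-α) := by
      simp [zz, Finset.sum_range_succ]
    rw [e]
    push_cast
    linarith

lemma zz_bound (α : ℝ) (hα : 1 < α) (K : ℕ) : (α - 1) * zz α K ≤ α := by
  rcases K with _ | K
  · simp [zz]; linarith
  · have := zz_upper α hα K
    have : 0 ≤ ((K : ℝ) + 1) ^ (1 - α) := by positivity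
    linarith

lemma sqf_indicator (n : ℕ) (hn : n ≠ 0) (M : ℕ) (hM : n ≤ M) :
    (if Squarefree n then (1 : ℝ) else 0) =
      ∑ d ∈ Finset.range (M + 1), if d ^ 2 ∣ n then (ArithmeticFunction.moebius d : ℝ) else 0 := by
  obtain ⟨a, b, hab, ha⟩ := Nat.sq_mul_squarefree n
  have hb : b ≠ 0 := by rintro rfl; simp at hab; omega
  have hdv : ∀ d, d ^ 2 ∣ n ↔ d ∣ b := by
    intro d
    constructor
    · intro h
      rw [← hab] at h
      have hg : 0 < Nat.gcd d b := Nat.gcd_pos_of_pos_right _ (Nat.pos_of_ne_zero hb)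
      obtain ⟨d', b', hco, hd', hb'⟩ := Nat.exists_coprime d b
      have hgb : Nat.gcd d b ∣ b := Nat.gcd_dvd_right _ _
      generalize Nat.gcd d b = g at hg hd' hb' hgb
      rw [hd', hb', mul_pow, mul_pow, mul_right_comm] at h
      have h' := Nat.dvd_of_mul_dvd_mul_right (pow_pos hg 2) h
      have h'' : d' ^ 2 ∣ a := (Nat.Coprime.pow 2 2 hco).dvd_of_dvd_mul_left h'
      have h3 : d' = 1 := by simpa using ha d' (by rwa [← sq])
      rw [hd', h3, one_mul]
      exact hgb
    · intro h
      rw [← hab]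
      exact (pow_dvd_pow_of_dvd h 2).mul_right _
  have h1 : Squarefree n ↔ b = 1 := by
    constructor
    · intro h
      have := h b (by rw [← hab, sq]; exact dvd_mul_right _ _)
      simpa using this
    · rintro rfl
      rw [← hab]; simpa using ha
  have h2 : ∑ d ∈ b.divisors, (ArithmeticFunction.moebius d) = if b = 1 then 1 else 0 := by
    rw [← ArithmeticFunction.coe_mul_zeta_apply, ArithmeticFunction.moebius_mul_coe_zeta,
      ArithmeticFunction.one_apply]
  have hbn : b ≤ n := Nat.le_of_dvd (by omega) (by rw [← hab, sq, mul_assoc]; exact dvd_mul_right _ _)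
  rw [← Finset.sum_filter]
  have h3 : (Finset.range (M + 1)).filter (fun d => d ^ 2 ∣ n) = b.divisors := by
    ext d
    simp only [Finset.mem_filter, Finset.mem_range, Nat.mem_divisors, hdv]
    constructor
    · rintro ⟨_, h⟩; exact ⟨h, hb⟩
    · rintro ⟨h, _⟩; exact ⟨by have := Nat.le_of_dvd (by omega) h; omega, h⟩
  rw [h3, ← Int.cast_sum, h2]
  simp [h1]

/-- Truncated squarefree zeta sum. -/
noncomputable def zs (α : ℝ) (N : ℕ) : ℝ :=
  ∑ n ∈ Finset.range N, if Squarefree (n + 1) then ((n : ℝ) + 1) ^ (-α) else 0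

lemma zs_eq (α : ℝ) (N : ℕ) :
    zs α N = ∑' d : ℕ, (ArithmeticFunction.moebius d : ℝ) * (d : ℝ) ^ (-(2 * α)) *
      zz α (N / d ^ 2) := by
  rw [tsum_eq_sum (s := Finset.range (N + 1))]
  · have h : zs α N = ∑ n ∈ Finset.range N, ∑ d ∈ Finset.range (N + 1),
        if d ^ 2 ∣ n + 1 then (ArithmeticFunction.moebius d : ℝ) * ((n : ℝ) + 1) ^ (-α) else 0 := by
      unfold zs
      refine Finset.sum_congr rfl fun n hn => ?_
      have := sqf_indicator (n + 1) (by omega) N (by simpa using hn)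
      calc _ = (if Squarefree (n + 1) then (1 : ℝ) else 0) * ((n : ℝ) + 1) ^ (-α) := by
            split_ifs <;> simp
        _ = _ := by
            rw [this, Finset.sum_mul]
            refine Finset.sum_congr rfl fun d _ => ?_
            split_ifs <;> simp
    rw [h, Finset.sum_comm]
    refine Finset.sum_congr rfl fun d hd => ?_
    rcases Nat.eq_zero_or_pos d with rfl | hd0
    · simp
    rw [← Finset.sum_filter]
    unfold zz
    rw [Finset.mul_sum]
    symm
    have hd2 : 0 < d ^ 2 := by positivity
    refine Finset.sum_bij (fun m _ => d ^ 2 * (m + 1) - 1) ?_ ?_ ?_ ?_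
    · intro m hm
      have hm' : m + 1 ≤ N / d ^ 2 := by simpa using hm
      have h1 : (m + 1) * d ^ 2 ≤ N := (Nat.le_div_iff_mul_le hd2).1 hm'
      have h2 : 0 < d ^ 2 * (m + 1) := by positivity
      simp only [Finset.mem_filter, Finset.mem_range]
      constructor
      · rw [mul_comm] at h1; omega
      · rw [Nat.sub_add_cancel h2]; exact dvd_mul_right _ _
    · intro m1 _ m2 _ h
      have h1 : 0 < d ^ 2 * (m1 + 1) := by positivity
      have h2 : 0 < d ^ 2 * (m2 + 1) := by positivity
      have h3 : d ^ 2 * (m1 + 1) = d ^ 2 * (m2 + 1) := by omega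
      have := Nat.eq_of_mul_eq_mul_left hd2 h3
      omega
    · intro n hn
      simp only [Finset.mem_filter, Finset.mem_range] at hn
      obtain ⟨hn1, k, hk⟩ := hn
      have hk0 : k ≠ 0 := by rintro rfl; simp at hk
      refine ⟨k - 1, ?_, ?_⟩
      · have : k ≤ N / d ^ 2 := (Nat.le_div_iff_mul_le hd2).2 (by rw [mul_comm, ← hk]; omega)
        simp only [Finset.mem_range]; omega
      · rw [Nat.sub_add_cancel (by omega), ← hk]; simp
    · intro m _
      have h2 : 1 ≤ d ^ 2 * (m + 1) := by nlinarith
      rw [Nat.cast_sub h2]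
      push_cast
      rw [sub_add_cancel, Real.mul_rpow (by positivity) (by positivity), ← Real.rpow_natCast (d : ℝ) 2,
        ← Real.rpow_mul (by positivity)]
      push_cast
      rw [mul_neg, mul_assoc]
  · intro d hd
    have hd' : N < d := by simpa using hd
    have : N / d ^ 2 = 0 := Nat.div_eq_of_lt (by nlinarith)
    simp [this, zz]

lemma moeb_abs (d : ℕ) : |(ArithmeticFunction.moebius d : ℝ)| ≤ 1 := by
  exact_mod_cast ArithmeticFunction.abs_moebius_le_one

lemma coef_bound (d : ℕ) (α : ℝ) (hα : 1 ≤ α) :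
    |(ArithmeticFunction.moebius d : ℝ) * (d : ℝ) ^ (-(2 * α))| ≤ (d : ℝ) ^ (-2 : ℝ) := by
  rcases Nat.eq_zero_or_pos d with rfl | hd
  · simp
  rw [abs_mul, abs_of_nonneg (a := (d : ℝ) ^ (-(2 * α))) (by positivity)]
  have h1 : (1 : ℝ) ≤ d := by exact_mod_cast hd
  have h2 : (d : ℝ) ^ (-(2 * α)) ≤ (d : ℝ) ^ (-2 : ℝ) :=
    Real.rpow_le_rpow_of_exponent_le h1 (by linarith)
  have h3 : 0 ≤ (d : ℝ) ^ (-(2 * α)) := by positivity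
  nlinarith [moeb_abs d]

lemma summable_two : Summable (fun d : ℕ => (d : ℝ) ^ (-2 : ℝ)) :=
  Real.summable_nat_rpow.2 (by norm_num)

/-- Möbius series. -/
noncomputable def DD (α : ℝ) : ℝ :=
  ∑' d : ℕ, (ArithmeticFunction.moebius d : ℝ) * (d : ℝ) ^ (-(2 * α))

/-- Full zeta sum. -/
noncomputable def zinf (α : ℝ) : ℝ := ∑' n : ℕ, 1 / (n : ℝ) ^ α

lemma DD_ne : DD 1 ≠ 0 := by
  intro h
  have h1 := LSeries_one_mul_Lseries_moebius (s := 2) (by norm_num)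
  have h2 : LSeries (fun n => ((ArithmeticFunction.moebius n : ℤ) : ℂ)) 2 = ((DD 1 : ℝ) : ℂ) := by
    unfold LSeries DD
    rw [Complex.ofReal_tsum]
    refine tsum_congr fun d => ?_
    rw [LSeries.term_def₀ (by simp)]
    have : (d : ℝ) ^ (-(2 * 1) : ℝ) = ((d : ℝ) ^ 2)⁻¹ := by
      rw [mul_one, Real.rpow_neg (by positivity)]
      norm_num
    rw [this]
    push_cast
    rw [Complex.cpow_neg]
    norm_num
  rw [h2, h] at h1
  simp at h1

lemma zz_tendsto (α : ℝ) (hα : 1 < α) : Tendsto (zz α) atTop (nhds (zinf α)) := by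
  have hs : Summable (fun n : ℕ => 1 / (n : ℝ) ^ α) := Real.summable_one_div_nat_rpow.2 hα
  have := (tendsto_add_atTop_iff_nat 1).2 hs.hasSum.tendsto_sum_nat
  refine this.congr fun N => ?_
  rw [Finset.sum_range_succ']
  unfold zz
  simp only [Nat.cast_zero, Real.zero_rpow (show α ≠ 0 by linarith), div_zero, add_zero]
  refine Finset.sum_congr rfl fun m _ => ?_
  rw [Real.rpow_neg (by positivity), one_div]
  push_cast
  rfl

lemma zs_tendsto (α : ℝ) (hα : 1 < α) : Tendsto (zs α) atTop (nhds (zetaSqf α)) := by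
  have hs : Summable (fun n : ℕ => if Squarefree n then (n : ℝ) ^ (-α) else 0) := by
    refine Summable.of_nonneg_of_le (fun n => ?_) (fun n => ?_)
      (Real.summable_nat_rpow.2 (show -α < -1 by linarith))
    · split_ifs <;> positivity
    · split_ifs
      · exact le_rfl
      · positivity
  have := (tendsto_add_atTop_iff_nat 1).2 hs.hasSum.tendsto_sum_nat
  refine this.congr fun N => ?_
  rw [Finset.sum_range_succ']
  unfold zs
  simp

lemma zetaSqf_eq (α : ℝ) (hα : 1 < α) : zetaSqf α = DD α * zinf α := by
  refine tendsto_nhds_unique (zs_tendsto α hα) ?_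
  have h : Tendsto (fun N : ℕ => ∑' d : ℕ, (ArithmeticFunction.moebius d : ℝ) *
      (d : ℝ) ^ (-(2 * α)) * zz α (N / d ^ 2)) atTop
      (nhds (∑' d : ℕ, (ArithmeticFunction.moebius d : ℝ) * (d : ℝ) ^ (-(2 * α)) * zinf α)) := by
    refine tendsto_tsum_of_dominated_convergence
      (bound := fun d : ℕ => (d : ℝ) ^ (-2 : ℝ) * (α / (α - 1))) (summable_two.mul_right _) ?_ ?_
    · intro d
      rcases Nat.eq_zero_or_pos d with rfl | hd
      · simp
      refine ((zz_tendsto α hα).comp ?_).const_mul _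
      exact Nat.tendsto_div_const_atTop (by positivity)
    · refine Eventually.of_forall fun N d => ?_
      rw [Real.norm_eq_abs, abs_mul, abs_of_nonneg (zz_nonneg _ _)]
      refine mul_le_mul (coef_bound d α hα.le) ?_ (zz_nonneg _ _) (by positivity)
      rw [le_div_iff₀ (by linarith), mul_comm]
      exact zz_bound α hα _
  rw [tsum_mul_right] at h
  exact h.congr fun N => (zs_eq α N).symm

lemma coef_tendsto (d : ℕ) : Tendsto (fun α : ℝ => (ArithmeticFunction.moebius d : ℝ) *
    (d : ℝ) ^ (-(2 * α))) (nhdsWithin 1 (Set.Ioi 1))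
    (nhds ((ArithmeticFunction.moebius d : ℝ) * (d : ℝ) ^ (-(2 * 1) : ℝ))) := by
  rcases Nat.eq_zero_or_pos d with rfl | hd
  · simp
  have hd' : (d : ℝ) ≠ 0 := by positivity
  refine Tendsto.mono_left (Continuous.tendsto ?_ 1) nhdsWithin_le_nhds
  exact continuous_const.mul (Continuous.rpow continuous_const (by fun_prop) fun _ => Or.inl hd')

lemma DD_tendsto : Tendsto DD (nhdsWithin 1 (Set.Ioi 1)) (nhds (DD 1)) := by
  refine tendsto_tsum_of_dominated_convergence summable_two coef_tendsto ?_
  filter_upwards [self_mem_nhdsWithin] with α hα d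
  exact coef_bound d α (le_of_lt hα)

lemma zeta_lim : Tendsto (fun α => (α - 1) * zetaSqf α) (nhdsWithin 1 (Set.Ioi 1))
    (nhds (DD 1)) := by
  have := DD_tendsto.mul tendsto_sub_mul_tsum_nat_rpow
  rw [mul_one] at this
  refine this.congr' ?_
  filter_upwards [self_mem_nhdsWithin] with α hα
  rw [zetaSqf_eq α hα, zinf]; ring

/-- Cutoff. -/
noncomputable def cut (t α : ℝ) : ℕ := ⌊Real.exp (t / (α - 1))⌋₊

lemma zz_cut_lim (t : ℝ) (ht : 0 ≤ t) (d : ℕ) (hd : 0 < d) :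
    Tendsto (fun α => (α - 1) * zz α (cut t α / d ^ 2)) (nhdsWithin 1 (Set.Ioi 1))
      (nhds (1 - Real.exp (-t))) := by
  have hdR : (0 : ℝ) < d := by exact_mod_cast hd
  have hc : Continuous (fun α : ℝ => ((d : ℝ) ^ 2) ^ (α - 1)) :=
    Continuous.rpow continuous_const (by fun_prop) fun _ => Or.inl (by positivity)
  have hX : ∀ α : ℝ, 1 < α → (Real.exp (t / (α - 1)) / (d : ℝ) ^ 2) ^ (1 - α) =
      Real.exp (-t) * ((d : ℝ) ^ 2) ^ (α - 1) := by
    intro α hα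
    have h0 : α - 1 ≠ 0 := by linarith
    rw [Real.div_rpow (by positivity) (by positivity), ← Real.exp_mul,
      show 1 - α = -(α - 1) by ring, Real.rpow_neg (by positivity), div_inv_eq_mul]
    congr 2
    field_simp
  have e0 : Real.exp (-t) ≤ 1 := by simpa using ht
  have hl : Tendsto (fun α : ℝ => 1 - Real.exp (-t) * ((d : ℝ) ^ 2) ^ (α - 1))
      (nhdsWithin 1 (Set.Ioi 1)) (nhds (1 - Real.exp (-t))) := by
    have : Continuous (fun α : ℝ => 1 - Real.exp (-t) * ((d : ℝ) ^ 2) ^ (α - 1)) := by fun_prop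
    simpa using (this.tendsto 1).mono_left nhdsWithin_le_nhds
  have hu : Tendsto (fun α : ℝ => max 0 (α - Real.exp (-t) * ((d : ℝ) ^ 2) ^ (α - 1)))
      (nhdsWithin 1 (Set.Ioi 1)) (nhds (1 - Real.exp (-t))) := by
    have : Continuous (fun α : ℝ => max 0 (α - Real.exp (-t) * ((d : ℝ) ^ 2) ^ (α - 1))) := by
      fun_prop
    have := (this.tendsto 1).mono_left (nhdsWithin_le_nhds (s := Set.Ioi 1))
    simpa [e0] using this
  refine tendsto_of_tendsto_of_tendsto_of_le_of_le' hl hu ?_ ?_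
  · filter_upwards [self_mem_nhdsWithin] with α hα
    have hα : 1 < α := hα
    refine le_trans ?_ (zz_lower α hα _)
    rw [← hX α hα]
    have h1 : Real.exp (t / (α - 1)) / (d : ℝ) ^ 2 ≤ ((cut t α / d ^ 2 : ℕ) : ℝ) + 1 := by
      rw [div_le_iff₀ (by positivity)]
      have h2 : Real.exp (t / (α - 1)) < cut t α + 1 := Nat.lt_floor_add_one _
      have h3 : cut t α < (cut t α / d ^ 2 + 1) * d ^ 2 := by
        rw [mul_comm]; exact Nat.lt_mul_div_succ _ (by positivity)
      have h4 : ((cut t α : ℝ)) + 1 ≤ (((cut t α / d ^ 2 : ℕ) : ℝ) + 1) * (d : ℝ) ^ 2 := by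
        exact_mod_cast h3
      linarith
    have := Real.rpow_le_rpow_of_nonpos (z := 1 - α) (by positivity) h1 (by linarith)
    linarith
  · filter_upwards [self_mem_nhdsWithin] with α hα
    have hα : 1 < α := hα
    rcases hK : cut t α / d ^ 2 with _ | K
    · simp [zz]
    · refine le_trans (zz_upper α hα K) (le_trans ?_ (le_max_right _ _))
      rw [← hX α hα]
      have h1 : ((K : ℝ) + 1) ≤ Real.exp (t / (α - 1)) / (d : ℝ) ^ 2 := by
        rw [le_div_iff₀ (by positivity)]
        have h2 : (cut t α : ℝ) ≤ Real.exp (t / (α - 1)) := Nat.floor_le (by positivity)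
        have h3 : (K + 1) * d ^ 2 ≤ cut t α := by rw [← hK]; exact Nat.div_mul_le_self _ _
        have h4 : ((K : ℝ) + 1) * (d : ℝ) ^ 2 ≤ cut t α := by exact_mod_cast h3
        linarith
      have := Real.rpow_le_rpow_of_nonpos (z := 1 - α) (by positivity) h1 (by linarith)
      linarith

lemma zs_cut_lim (t : ℝ) (ht : 0 ≤ t) :
    Tendsto (fun α => (α - 1) * zs α (cut t α)) (nhdsWithin 1 (Set.Ioi 1))
      (nhds (DD 1 * (1 - Real.exp (-t)))) := by
  have h : Tendsto (fun α : ℝ => ∑' d : ℕ, (ArithmeticFunction.moebius d : ℝ) *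
      (d : ℝ) ^ (-(2 * α)) * ((α - 1) * zz α (cut t α / d ^ 2))) (nhdsWithin 1 (Set.Ioi 1))
      (nhds (∑' d : ℕ, (ArithmeticFunction.moebius d : ℝ) * (d : ℝ) ^ (-(2 * 1) : ℝ) *
        (1 - Real.exp (-t)))) := by
    refine tendsto_tsum_of_dominated_convergence
      (bound := fun d : ℕ => (d : ℝ) ^ (-2 : ℝ) * 2) (summable_two.mul_right _) ?_ ?_
    · intro d
      rcases Nat.eq_zero_or_pos d with rfl | hd
      · simp
      exact (coef_tendsto d).mul (zz_cut_lim t ht d hd)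
    · filter_upwards [self_mem_nhdsWithin,
        mem_nhdsWithin_of_mem_nhds (Iio_mem_nhds (show (1 : ℝ) < 2 by norm_num))] with α hα hα2 d
      have hα : 1 < α := hα
      have hα2 : α < 2 := hα2
      have h0 : 0 ≤ (α - 1) * zz α (cut t α / d ^ 2) :=
        mul_nonneg (by linarith) (zz_nonneg _ _)
      rw [Real.norm_eq_abs, abs_mul, abs_of_nonneg h0]
      exact mul_le_mul (coef_bound d α hα.le) ((zz_bound α hα _).trans hα2.le) h0 (by positivity)
  rw [tsum_mul_right] at h
  refine h.congr fun α => ?_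
  rw [zs_eq, ← tsum_mul_left]
  exact tsum_congr fun d => by ring

lemma mem_cut (t α : ℝ) (hα : 1 < α) (n : ℕ) :
    (α - 1) * Real.log ((n : ℝ) + 1) ≤ t ↔ n < cut t α := by
  rw [cut, ← Nat.succ_le_iff, Nat.le_floor_iff (by positivity), mul_comm,
    ← le_div_iff₀ (by linarith), Real.log_le_iff_le_exp (by positivity)]
  push_cast
  rfl

lemma sqfCount_succ (n : ℕ) :
    sqfCount (n + 1) = sqfCount n + if Squarefree (n + 1) then 1 else 0 := by
  unfold sqfCount
  rw [← Finset.insert_Icc_right_eq_Icc_add_one (by omega), Finset.filter_insert]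
  split_ifs
  · rw [Finset.card_insert_of_notMem (by simp)]
  · rfl

lemma sqfCount_le (n : ℕ) : sqfCount n ≤ n := by
  unfold sqfCount
  simpa using Finset.card_filter_le (Finset.Icc 1 n) Squarefree

lemma abel (α : ℝ) (N : ℕ) :
    ∑ n ∈ Finset.range N, (sqfCount (n + 1) : ℝ) *
      (((n : ℝ) + 1) ^ (-α) - ((n : ℝ) + 2) ^ (-α)) =
    zs α N - sqfCount N * ((N : ℝ) + 1) ^ (-α) := by
  induction N with
  | zero => simp [zs, sqfCount]
  | succ N ih =>
    have e : zs α (N + 1) = zs α N + if Squarefree (N + 1) then ((N : ℝ) + 1) ^ (-α) else 0 := by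
      simp [zs, Finset.sum_range_succ]
    rw [Finset.sum_range_succ, ih, e, sqfCount_succ]
    push_cast
    rw [show (N : ℝ) + 1 + 1 = N + 2 by ring]
    split_ifs <;> ring

lemma rem_bound (α : ℝ) (hα : 1 < α) (N : ℕ) : sqfCount N * ((N : ℝ) + 1) ^ (-α) ≤ 1 := by
  have h1 : (sqfCount N : ℝ) ≤ (N : ℝ) + 1 := by
    have : (sqfCount N : ℝ) ≤ N := by exact_mod_cast sqfCount_le N
    linarith
  have h2 : ((N : ℝ) + 1) ^ (-α) ≤ ((N : ℝ) + 1) ^ (-1 : ℝ) :=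
    Real.rpow_le_rpow_of_exponent_le (by linarith [Nat.cast_nonneg (α := ℝ) N]) (by linarith)
  calc _ ≤ ((N : ℝ) + 1) * ((N : ℝ) + 1) ^ (-1 : ℝ) := by
        refine mul_le_mul h1 h2 (by positivity) (by positivity)
    _ = 1 := by rw [Real.rpow_neg_one]; exact mul_inv_cancel₀ (by positivity)

/-- If `Z_α^{(s)}` has the squarefree Zeta distribution
(`P(Z = n) = 1/(n^α ζ_{N_s}(α))` for squarefree `n`) and `d_α^{(s)}` the squarefree
delta-Zeta distribution (`P(d = n) = |N_s ∩ [1,n]| (n^{−α} − (n+1)^{−α})/ζ_{N_s}(α)`),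
then both `(α−1) log Z_α^{(s)}` and `(α−1) log d_α^{(s)}` converge in distribution to
`Exp(1)` as `α → 1⁺`. -/
theorem stmt18 (t : ℝ) (ht : 0 ≤ t) :
    Tendsto (fun α : ℝ =>
        ∑' n : ℕ, if Squarefree (n + 1) ∧ (α - 1) * Real.log ((n : ℝ) + 1) ≤ t then
          ((n : ℝ) + 1) ^ (-α) / zetaSqf α else 0)
      (nhdsWithin 1 (Set.Ioi 1)) (nhds (1 - Real.exp (-t))) ∧
    Tendsto (fun α : ℝ =>
        ∑' n : ℕ, if (α - 1) * Real.log ((n : ℝ) + 1) ≤ t then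
          (sqfCount (n + 1) : ℝ) * (((n : ℝ) + 1) ^ (-α) - ((n : ℝ) + 2) ^ (-α)) / zetaSqf α
        else 0)
      (nhdsWithin 1 (Set.Ioi 1)) (nhds (1 - Real.exp (-t))) := by
  have hD := DD_ne
  constructor
  · have h := (zs_cut_lim t ht).div zeta_lim hD
    rw [mul_div_cancel_left₀ _ hD] at h
    refine h.congr' ?_
    filter_upwards [self_mem_nhdsWithin] with α hα
    have hα : 1 < α := hα
    have h0 : α - 1 ≠ 0 := by linarith
    simp only [Pi.div_apply]
    rw [mul_div_mul_left _ _ h0, tsum_eq_sum (s := Finset.range (cut t α)), zs, Finset.sum_div]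
    · refine Finset.sum_congr rfl fun n hn => ?_
      have := (mem_cut t α hα n).2 (by simpa using hn)
      simp only [this, and_true]
      split_ifs <;> simp
    · intro n hn
      have : ¬ ((α - 1) * Real.log ((n : ℝ) + 1) ≤ t) := by
        rw [mem_cut t α hα n]; simpa using hn
      simp only [this, and_false, if_false]
  · have hr : Tendsto (fun α : ℝ => (α - 1) * (sqfCount (cut t α) * ((cut t α : ℝ) + 1) ^ (-α)))
        (nhdsWithin 1 (Set.Ioi 1)) (nhds 0) := by
      have hu : Tendsto (fun α : ℝ => α - 1) (nhdsWithin 1 (Set.Ioi 1)) (nhds 0) := by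
        have : Continuous (fun α : ℝ => α - 1) := by fun_prop
        simpa using (this.tendsto 1).mono_left nhdsWithin_le_nhds
      refine tendsto_of_tendsto_of_tendsto_of_le_of_le' tendsto_const_nhds hu ?_ ?_
      · filter_upwards [self_mem_nhdsWithin] with α hα
        have hα : 1 < α := hα
        exact mul_nonneg (by linarith) (by positivity)
      · filter_upwards [self_mem_nhdsWithin] with α hα
        have hα : 1 < α := hα
        exact mul_le_of_le_one_right (by linarith) (rem_bound α hα _)
    have h := ((zs_cut_lim t ht).sub hr).div zeta_lim hD
    rw [sub_zero, mul_div_cancel_left₀ _ hD] at h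
    refine h.congr' ?_
    filter_upwards [self_mem_nhdsWithin] with α hα
    have hα : 1 < α := hα
    have h0 : α - 1 ≠ 0 := by linarith
    simp only [Pi.div_apply]
    rw [← mul_sub, mul_div_mul_left _ _ h0, tsum_eq_sum (s := Finset.range (cut t α)), ← abel,
      Finset.sum_div]
    · refine Finset.sum_congr rfl fun n hn => ?_
      rw [if_pos ((mem_cut t α hα n).2 (by simpa using hn))]
    · intro n hn
      have : ¬ ((α - 1) * Real.log ((n : ℝ) + 1) ≤ t) := by
        rw [mem_cut t α hα n]; simpa using hn
      rw [if_neg this]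
end
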